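/- arXiv:2605.13145 — 5 statements merged into one kernel-verified Lean document; each statement's English description precedes it below -/
import Mathlib

section
/- Let T, K, m be positive integers and L > 0 a real number (playing the role of log T). Let Δ : Fin K → ℝ be nonnegative suboptimality gaps, and let Δ_min > 0 satisfy Δ_min ≤ Δ_a for every arm a with Δ_a > 0. Let A : {1,…,T} → Set (Fin K) be a family of nonempty active-arm sets such that: (i) each A_t contains some arm a* with Δ_{a*} = 0; and (ii) for every t and every a ∈ A_t, Δ_a² ≤ 32·K·L/(m·t) (the clean-event guarantee that each active arm has received at least t·m/K samples and is not yet eliminated). Then: (1) for every t > 32·K·L/(m·Δ_min²), every arm a ∈ A_t has Δ_a = 0; and (2) the cumulative per-step maximal regret satisfies ∑_{t=1}^T max_{a ∈ A_t} Δ_a ≤ 64·K·L/(m·Δ_min). -/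
open Finset

/-- Regret analysis of Multi-Agent Successive Elimination on the clean event:
if every active arm `a ∈ A_t` satisfies `Δ_a² ≤ 32·K·L/(m·t)` and every active set
contains an optimal arm, then (1) after time `32·K·L/(m·Δ_min²)` only optimal arms
remain active, and (2) `∑_{t=1}^T max_{a ∈ A_t} Δ_a ≤ 64·K·L/(m·Δ_min)`. -/
theorem mase_regret_bound
    (T K m : ℕ) (hT : 0 < T) (hK : 0 < K) (hm : 0 < m)
    (L : ℝ) (hL : 0 < L)
    (Δ : Fin K → ℝ) (hΔ : ∀ a, 0 ≤ Δ a)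
    (Δmin : ℝ) (hΔminpos : 0 < Δmin)
    (hΔmin : ∀ a, 0 < Δ a → Δmin ≤ Δ a)
    (A : ℕ → Finset (Fin K))
    (hopt : ∀ t ∈ Finset.Icc 1 T, ∃ a ∈ A t, Δ a = 0)
    (hclean : ∀ t ∈ Finset.Icc 1 T, ∀ a ∈ A t,
      (Δ a) ^ 2 ≤ 32 * K * L / (m * t)) :
    (∀ t ∈ Finset.Icc 1 T, 32 * K * L / (m * Δmin ^ 2) < t →
        ∀ a ∈ A t, Δ a = 0)
    ∧ ∑ t ∈ Finset.Icc 1 T, (⨆ a ∈ A t, Δ a) ≤ 64 * K * L / (m * Δmin) := by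
  have hm' : (0:ℝ) < m := by exact_mod_cast hm
  have hK' : (0:ℝ) < K := by exact_mod_cast hK
  obtain ⟨C, hC⟩ : ∃ C : ℝ, C = 32 * K * L / m := ⟨_, rfl⟩
  have hCpos : 0 < C := by rw [hC]; positivity
  have e1 : 32 * K * L / (m * Δmin ^ 2) = C / Δmin ^ 2 := by rw [hC, div_div]
  have e2 : 64 * K * L / (m * Δmin) = 2 * C / Δmin := by
    rw [hC]; field_simp; ring
  have hcl : ∀ t ∈ Finset.Icc 1 T, ∀ a ∈ A t, (Δ a) ^ 2 ≤ C / t := by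
    intro t ht a ha
    rw [hC, div_div]; exact hclean t ht a ha
  rw [e1, e2]
  have h1 : ∀ t ∈ Finset.Icc 1 T, C / Δmin ^ 2 < t → ∀ a ∈ A t, Δ a = 0 := by
    intro t ht hlt a ha
    by_contra hne
    have hp : 0 < Δ a := lt_of_le_of_ne (hΔ a) (Ne.symm hne)
    have h2 := hΔmin a hp
    have h3 := hcl t ht a ha
    have ht0 : (0:ℝ) < t := by
      have := (Finset.mem_Icc.mp ht).1
      exact_mod_cast this
    rw [div_lt_iff₀ (by positivity)] at hlt
    rw [le_div_iff₀ ht0] at h3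
    have h4 : Δmin ^ 2 ≤ Δ a ^ 2 := by gcongr
    nlinarith
  refine ⟨h1, ?_⟩
  have hM : ∀ t ∈ Finset.Icc 1 T, (⨆ a ∈ A t, Δ a) ≤ √(C / t) := by
    intro t ht
    refine Real.iSup_le (fun a => Real.iSup_le (fun ha => ?_) (Real.sqrt_nonneg _))
      (Real.sqrt_nonneg _)
    exact Real.le_sqrt_of_sq_le (hcl t ht a ha)
  have hS : ∀ n : ℕ, n ≤ T → ∑ t ∈ Finset.Icc 1 n, (⨆ a ∈ A t, Δ a) ≤ 2 * √C * √n := by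
    intro n
    induction n with
    | zero => intro _; simp
    | succ n ih =>
      intro hn
      rw [Finset.sum_Icc_succ_top (by omega)]
      have a1 := ih (by omega)
      have a2 := hM (n + 1) (Finset.mem_Icc.mpr ⟨by omega, hn⟩)
      rw [Real.sqrt_div hCpos.le] at a2
      have hc : 0 ≤ √C := Real.sqrt_nonneg _
      have hy : 0 < √((n + 1 : ℕ) : ℝ) := Real.sqrt_pos.mpr (by positivity)
      have hx : 0 ≤ √(n : ℝ) := Real.sqrt_nonneg _
      have hx2 : √(n : ℝ) ^ 2 = n := Real.sq_sqrt (by positivity)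
      have hy2 : √((n + 1 : ℕ) : ℝ) ^ 2 = n + 1 := by
        rw [Real.sq_sqrt (by positivity)]; push_cast; ring
      generalize √((n + 1 : ℕ) : ℝ) = y at *
      generalize √(n : ℝ) = x at *
      have k : 1 / y ≤ 2 * (y - x) := by
        rw [div_le_iff₀ hy]; nlinarith [sq_nonneg (y - x)]
      have k2 : √C / y ≤ √C * (2 * (y - x)) := by
        rw [div_eq_mul_one_div]; gcongr
      linarith
  have hF : ∀ n : ℕ, n ≤ T → ∑ t ∈ Finset.Icc 1 n, (⨆ a ∈ A t, Δ a) ≤ 2 * C / Δmin := by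
    intro n
    induction n with
    | zero => intro _; simp; positivity
    | succ n ih =>
      intro hn
      by_cases h : C / Δmin ^ 2 < ((n + 1 : ℕ) : ℝ)
      · rw [Finset.sum_Icc_succ_top (by omega)]
        have a1 := ih (by omega)
        have a2 : (⨆ a ∈ A (n + 1), Δ a) ≤ 0 :=
          Real.iSup_le (fun a => Real.iSup_le (fun ha =>
            (h1 (n + 1) (Finset.mem_Icc.mpr ⟨by omega, hn⟩) h a ha).le) le_rfl) le_rfl
        linarith
      · refine (hS (n + 1) hn).trans ?_
        have a3 : √((n + 1 : ℕ) : ℝ) ≤ √C / Δmin := by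
          rw [← Real.sqrt_sq hΔminpos.le, ← Real.sqrt_div hCpos.le]
          exact Real.sqrt_le_sqrt (not_lt.mp h)
        calc 2 * √C * √((n + 1 : ℕ) : ℝ) ≤ 2 * √C * (√C / Δmin) := by gcongr
          _ = 2 * (√C * √C) / Δmin := by ring
          _ = 2 * C / Δmin := by rw [Real.mul_self_sqrt hCpos.le]
  exact hF T le_rfl
end

section
/- Let T, K, m be positive integers, L > 0 a real, and N a positive integer with 1 ≤ N ≤ T and N ≤ T^{2/3}·(K·L)^{1/3}·m^{-1/3} ≤ N + 1 (i.e., N is the exploration length T^{2/3}(KL)^{1/3}m^{-1/3}, assumed to be an integer for simplicity, so N = T^{2/3}(KL)^{1/3}m^{-1/3}). Let μ, μ̂ : Fin K → ℝ with 0 ≤ μ_a ≤ 1 for all a, and suppose |μ_a − μ̂_a| ≤ √(2·K·L/(m·N)) for every a. Let â maximize μ̂ and let μ* = max_a μ_a. Then the total regret of an agent that explores for N steps (incurring per-step regret at most 1) and then plays â for the remaining T − N steps satisfies N + (T − N)·(μ* − μ_â) ≤ (1 + 2√2)·T^{2/3}·(K·L)^{1/3}·m^{-1/3}. -/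
/-- Regret bound for Multi-Agent Fixed Arm Explore-Exploit on the clean event:
with exploration length `N = T^{2/3}·(K·L)^{1/3}·m^{-1/3}` (assumed an integer),
empirical means within `√(2·K·L/(m·N))` of true means, and `â` the empirically
best arm, the total regret `N + (T − N)·(μ* − μ_â)` is at most
`(1 + 2√2)·T^{2/3}·(K·L)^{1/3}·m^{-1/3}`. -/
theorem mafaee_regret_bound
    (T K m : ℕ) (hT : 0 < T) (hK : 0 < K) (hm : 0 < m)
    (L : ℝ) (hL : 0 < L)
    (N : ℕ) (hN1 : 1 ≤ N) (hNT : N ≤ T)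
    (hNlo : (N : ℝ) ≤ (T : ℝ) ^ ((2 : ℝ) / 3) * ((K : ℝ) * L) ^ ((1 : ℝ) / 3)
        * (m : ℝ) ^ (-(1 : ℝ) / 3))
    (hNhi : (T : ℝ) ^ ((2 : ℝ) / 3) * ((K : ℝ) * L) ^ ((1 : ℝ) / 3)
        * (m : ℝ) ^ (-(1 : ℝ) / 3) ≤ (N : ℝ) + 1)
    (hNeq : (N : ℝ) = (T : ℝ) ^ ((2 : ℝ) / 3) * ((K : ℝ) * L) ^ ((1 : ℝ) / 3)
        * (m : ℝ) ^ (-(1 : ℝ) / 3))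
    (μ μhat : Fin K → ℝ) (hμ : ∀ a, 0 ≤ μ a ∧ μ a ≤ 1)
    (hclose : ∀ a, |μ a - μhat a| ≤ Real.sqrt (2 * K * L / (m * N)))
    (ahat : Fin K) (hmax : ∀ a, μhat a ≤ μhat ahat) :
    (N : ℝ) + ((T : ℝ) - N) * ((⨆ a, μ a) - μ ahat)
      ≤ (1 + 2 * Real.sqrt 2)
          * ((T : ℝ) ^ ((2 : ℝ) / 3) * ((K : ℝ) * L) ^ ((1 : ℝ) / 3)
              * (m : ℝ) ^ (-(1 : ℝ) / 3)) := by
  have hTr : (0 : ℝ) < T := by exact_mod_cast hT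
  have hKr : (0 : ℝ) < K := by exact_mod_cast hK
  have hmr : (0 : ℝ) < m := by exact_mod_cast hm
  have hNr : (0 : ℝ) < N := by exact_mod_cast hN1
  have hNTr : (N : ℝ) ≤ T := by exact_mod_cast hNT
  have hKL : 0 < (K : ℝ) * L := mul_pos hKr hL
  have hcube : (N : ℝ) ^ 3 = (T : ℝ) ^ 2 * (K * L) * (m : ℝ)⁻¹ := by
    rw [hNeq, mul_pow, mul_pow, ← Real.rpow_mul_natCast hTr.le, ← Real.rpow_mul_natCast hKL.le,
      ← Real.rpow_mul_natCast hmr.le]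
    norm_num
    left
    rw [Real.rpow_neg_one]
  rw [← hNeq]
  have hs : Real.sqrt (2 * K * L / (m * N)) = Real.sqrt 2 * (N / T) := by
    have h1 : 2 * K * L / (m * N) = 2 * ((N : ℝ) / T) ^ 2 := by
      field_simp
      field_simp at hcube
      linarith
    rw [h1, Real.sqrt_mul (by norm_num), Real.sqrt_sq (by positivity)]
  rw [hs] at hclose
  haveI : Nonempty (Fin K) := ⟨ahat⟩
  have hgap : (⨆ a, μ a) - μ ahat ≤ 2 * Real.sqrt 2 * (N / T) := by
    have : (⨆ a, μ a) ≤ μ ahat + 2 * Real.sqrt 2 * (N / T) := by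
      apply ciSup_le
      intro a
      have h1 := (abs_le.mp (hclose a)).2
      have h2 := (abs_le.mp (hclose ahat)).1
      have h3 := hmax a
      linarith
    linarith
  have h4 : ((T : ℝ) - N) * ((⨆ a, μ a) - μ ahat) ≤ ((T : ℝ) - N) * (2 * Real.sqrt 2 * (N / T)) :=
    mul_le_mul_of_nonneg_left hgap (by linarith)
  have h5 : ((T : ℝ) - N) * (2 * Real.sqrt 2 * (N / T)) ≤ T * (2 * Real.sqrt 2 * (N / T)) :=
    mul_le_mul_of_nonneg_right (by linarith) (by positivity)
  have h6 : (T : ℝ) * (2 * Real.sqrt 2 * (N / T)) = 2 * Real.sqrt 2 * N := by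
    field_simp
  linarith
end

section
/- Let T, K, m be positive integers, L > 0 a real, Δ : Fin K → ℝ a nonnegative gap function, and a : {1,…,T} → Fin K a sequence of arm choices (all m agents play the chosen arm simultaneously, so the sample count of arm b at the start of step t is n_b(t) = m·|{s < t : a_s = b}|). Suppose that for every t ∈ {1,…,T} with n_{a_t}(t) > 0 we have Δ_{a_t} ≤ 2·√(2·L/n_{a_t}(t)). Then for every arm b with Δ_b > 0, the total sample count satisfies n_b(T+1) ≤ 8·L/Δ_b² + m. -/
open Finset

/-- Sample-count bound for Multi-Agent UCB on the clean event: if whenever arm `a_t`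
is chosen with `n_{a_t}(t) > 0` prior samples its gap satisfies
`Δ_{a_t} ≤ 2·√(2·L/n_{a_t}(t))`, then every suboptimal arm `b` (with `Δ_b > 0`)
satisfies `n_b(T+1) ≤ 8·L/Δ_b² + m`. -/
theorem maucb_sample_count_bound
    (T K m : ℕ) (hT : 0 < T) (hK : 0 < K) (hm : 0 < m)
    (L : ℝ) (hL : 0 < L)
    (Δ : Fin K → ℝ) (hΔ : ∀ b, 0 ≤ Δ b)
    (a : ℕ → Fin K)
    (n : Fin K → ℕ → ℕ)
    (hn : ∀ b t, n b t = m * ((Finset.Ico 1 t).filter (fun s => a s = b)).card)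
    (hclean : ∀ t ∈ Finset.Icc 1 T, 0 < n (a t) t →
        Δ (a t) ≤ 2 * Real.sqrt (2 * L / (n (a t) t)))
    (b : Fin K) (hb : 0 < Δ b) :
    (n b (T + 1) : ℝ) ≤ 8 * L / (Δ b) ^ 2 + m := by
  have hpos : 0 ≤ 8 * L / (Δ b) ^ 2 := by positivity
  have key : ∀ t, t ≤ T → (n b (t + 1) : ℝ) ≤ 8 * L / (Δ b) ^ 2 + m := by
    intro t
    induction t with
    | zero =>
      intro _
      have h0 : n b (0 + 1) = 0 := by rw [hn]; simp
      rw [h0]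
      push_cast
      positivity
    | succ t ih =>
      intro ht
      have ih' := ih (by omega)
      have hI : Finset.Ico 1 (t + 1 + 1) = insert (t + 1) (Finset.Ico 1 (t + 1)) := by
        ext x
        simp only [Finset.mem_Ico, Finset.mem_insert]
        omega
      by_cases hab : a (t + 1) = b
      · have h1 : n b (t + 1 + 1) = n b (t + 1) + m := by
          rw [hn, hn, hI, Finset.filter_insert, if_pos hab, Finset.card_insert_of_notMem (by simp)]
          ring
        rw [h1]
        push_cast
        have h2 : (n b (t + 1) : ℝ) ≤ 8 * L / (Δ b) ^ 2 := by
          rcases Nat.eq_zero_or_pos (n b (t + 1)) with h0 | h0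
          · rw [h0]; simpa using hpos
          · have hc := hclean (t + 1) (by simp only [Finset.mem_Icc]; omega) (by rw [hab]; exact h0)
            rw [hab] at hc
            have hN : (0 : ℝ) < n b (t + 1) := by exact_mod_cast h0
            have hsq : Real.sqrt (2 * L / (n b (t + 1))) ^ 2 = 2 * L / (n b (t + 1)) :=
              Real.sq_sqrt (by positivity)
            have h3 : (Δ b) ^ 2 ≤ (2 * Real.sqrt (2 * L / (n b (t + 1)))) ^ 2 :=
              pow_le_pow_left₀ hb.le hc 2
            rw [mul_pow, hsq] at h3
            have h4 : (2 : ℝ) ^ 2 * (2 * L / (n b (t + 1))) = 8 * L / (n b (t + 1)) := by ring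
            rw [h4, le_div_iff₀ hN] at h3
            rw [le_div_iff₀ (by positivity)]
            linarith
        linarith
      · have h1 : n b (t + 1 + 1) = n b (t + 1) := by
          rw [hn, hn, hI, Finset.filter_insert, if_neg hab]
        rw [h1]
        exact ih'
  exact key T le_rfl
end

section
/- Let T, K, m be positive integers, L > 0 a real, Δ : Fin K → ℝ with 0 ≤ Δ_b ≤ 1 for all b, and a : {1,…,T} → Fin K a sequence of arm choices with sample counts n_b(t) = m·|{s < t : a_s = b}|. Suppose that for every t ∈ {1,…,T} with n_{a_t}(t) > 0 we have Δ_{a_t} ≤ 2·√(2·L/n_{a_t}(t)). Then the per-agent cumulative regret satisfies ∑_{t=1}^T Δ_{a_t} ≤ ∑_{b : Δ_b > 0} 8·L/(m·Δ_b) + K. -/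
open Finset

/-- Per-agent regret bound for Multi-Agent UCB on the clean event:
`∑_{t=1}^T Δ_{a_t} ≤ ∑_{b : Δ_b > 0} 8·L/(m·Δ_b) + K`. -/
theorem maucb_regret_bound
    (T K m : ℕ) (hT : 0 < T) (hK : 0 < K) (hm : 0 < m)
    (L : ℝ) (hL : 0 < L)
    (Δ : Fin K → ℝ) (hΔ : ∀ b, 0 ≤ Δ b ∧ Δ b ≤ 1)
    (a : ℕ → Fin K)
    (n : Fin K → ℕ → ℕ)
    (hn : ∀ b t, n b t = m * ((Finset.Ico 1 t).filter (fun s => a s = b)).card)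
    (hclean : ∀ t ∈ Finset.Icc 1 T, 0 < n (a t) t →
        Δ (a t) ≤ 2 * Real.sqrt (2 * L / (n (a t) t))) :
    ∑ t ∈ Finset.Icc 1 T, Δ (a t)
      ≤ (∑ b ∈ Finset.univ.filter (fun b => 0 < Δ b), 8 * L / (m * Δ b)) + K := by
  have key : ∀ b, 0 < Δ b → ∀ t, t ≤ T →
      (((Finset.Ico 1 (t+1)).filter (fun s => a s = b)).card : ℝ) * Δ b
        ≤ 8 * L / (m * Δ b) + 1 := by
    intro b hb t
    have hm' : (0:ℝ) < m := by exact_mod_cast hm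
    have hpos : 0 < 8 * L / (m * Δ b) := by positivity
    induction t with
    | zero =>
      intro _
      simp
      linarith
    | succ t ih =>
      intro ht
      have ih := ih (by omega)
      have hI : Finset.Ico 1 (t+1+1) = insert (t+1) (Finset.Ico 1 (t+1)) := by
        ext x
        simp only [Finset.mem_Ico, Finset.mem_insert]
        omega
      rw [hI, Finset.filter_insert]
      split_ifs with h
      · rw [Finset.card_insert_of_notMem (by simp)]
        have hc := hclean (t+1) (by simp; omega)
        rw [h, hn] at hc
        generalize ((Finset.Ico 1 (t+1)).filter (fun s => a s = b)).card = N at *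
        have h1 := (hΔ b).2
        rcases Nat.eq_zero_or_pos N with h0 | h0
        · subst h0
          simp
          linarith
        · have hc := hc (Nat.mul_pos hm h0)
          have hN : (0:ℝ) < N := by exact_mod_cast h0
          push_cast at hc ⊢
          have hs : Real.sqrt (2 * L / (m * N)) ^ 2 = 2 * L / (m * N) :=
            Real.sq_sqrt (by positivity)
          have h2 : Δ b ^ 2 ≤ 8 * L / (m * N) := by
            calc Δ b ^ 2 ≤ (2 * Real.sqrt (2 * L / (m * N))) ^ 2 := by gcongr
              _ = 8 * L / (m * N) := by rw [mul_pow, hs]; ring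
          have h3 : (N:ℝ) * Δ b ≤ 8 * L / (m * Δ b) := by
            rw [le_div_iff₀ (by positivity)] at h2 ⊢
            nlinarith
          linarith
      · exact ih
  have hI : Finset.Icc 1 T = Finset.Ico 1 (T+1) := by
    ext x
    simp only [Finset.mem_Ico, Finset.mem_Icc]
    omega
  have hK' : (K:ℝ) = ∑ b : Fin K, (1:ℝ) := by simp
  rw [hI, ← Finset.sum_fiberwise (Finset.Ico 1 (T+1)) a, Finset.sum_filter, hK',
    ← Finset.sum_add_distrib]
  apply Finset.sum_le_sum
  intro b _
  have he : ∑ t ∈ Finset.Ico 1 (T+1) with a t = b, Δ (a t)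
      = (((Finset.Ico 1 (T+1)).filter (fun s => a s = b)).card : ℝ) * Δ b := by
    rw [← nsmul_eq_mul, ← Finset.sum_const]
    apply Finset.sum_congr rfl
    intro t ht
    rw [(Finset.mem_filter.mp ht).2]
  rw [he]
  split_ifs with hb
  · exact key b hb T le_rfl
  · have : Δ b = 0 := le_antisymm (not_lt.mp hb) (hΔ b).1
    rw [this]
    simp
end

section
/- Let T, K, m be positive integers and let a : {1,…,T} → Fin K be a sequence of arm choices, with sample counts n_b(t) = m·|{s < t : a_s = b}| (all m agents play the chosen arm simultaneously). Then ∑_{t=1}^T min(√(1/n_{a_t}(t)), 1) ≤ K + 2·√(K·T/m), where the minimum is taken to be 1 when n_{a_t}(t) = 0. -/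
open Finset

noncomputable def matsPhi (m c : ℕ) : ℝ :=
  if c = 0 then 0 else 1 + 2 * Real.sqrt ((c : ℝ) - 1) / Real.sqrt m

lemma matsPhi_step (m c : ℕ) (hm : 0 < m) :
    (if m * c = 0 then (1 : ℝ) else min (Real.sqrt (1 / ((m * c : ℕ) : ℝ))) 1)
      ≤ matsPhi m (c + 1) - matsPhi m c := by
  unfold matsPhi
  rcases Nat.eq_zero_or_pos c with h | h
  · subst h; simp
  · have h1 : m * c ≠ 0 := by positivity
    have h2 : c ≠ 0 := by omega
    simp only [h1, h2, if_false, Nat.succ_ne_zero]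
    refine (min_le_left _ _).trans ?_
    have hc : (1 : ℝ) ≤ c := by exact_mod_cast h
    have hm' : (0 : ℝ) < Real.sqrt m := Real.sqrt_pos.2 (by exact_mod_cast hm)
    have hs : (0 : ℝ) < Real.sqrt c := Real.sqrt_pos.2 (by linarith)
    have e1 : Real.sqrt c ^ 2 = c := Real.sq_sqrt (by linarith)
    have e2 : Real.sqrt ((c : ℝ) - 1) ^ 2 = c - 1 := Real.sq_sqrt (by linarith)
    have key : 1 / Real.sqrt c ≤ 2 * Real.sqrt c - 2 * Real.sqrt ((c : ℝ) - 1) := by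
      rw [div_le_iff₀ hs]
      nlinarith [sq_nonneg (Real.sqrt c - Real.sqrt ((c : ℝ) - 1))]
    have e3 : Real.sqrt (1 / ((m * c : ℕ) : ℝ)) = (1 / Real.sqrt c) / Real.sqrt m := by
      push_cast
      rw [Real.sqrt_div zero_le_one, Real.sqrt_mul (by positivity), Real.sqrt_one]
      field_simp
    rw [e3]
    calc _ ≤ (2 * Real.sqrt c - 2 * Real.sqrt ((c : ℝ) - 1)) / Real.sqrt m := by gcongr
      _ = _ := by push_cast; rw [add_sub_cancel_right]; ring

lemma matsPhi_le (m c : ℕ) : matsPhi m c ≤ 1 + 2 / Real.sqrt m * Real.sqrt c := by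
  unfold matsPhi
  split_ifs
  · positivity
  · have : Real.sqrt ((c : ℝ) - 1) ≤ Real.sqrt c := Real.sqrt_le_sqrt (by linarith)
    calc _ ≤ 1 + 2 * Real.sqrt c / Real.sqrt m := by gcongr
      _ = _ := by ring

lemma mats_pot (K m : ℕ) (hm : 0 < m) (a : ℕ → Fin K) (T : ℕ) :
    ∑ t ∈ Finset.Icc 1 T,
        (if m * ((Finset.Ico 1 t).filter (fun s => a s = a t)).card = 0 then (1 : ℝ)
         else min (Real.sqrt (1 / ((m * ((Finset.Ico 1 t).filter (fun s => a s = a t)).card : ℕ) : ℝ))) 1)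
      ≤ ∑ b, matsPhi m ((Finset.Ico 1 (T + 1)).filter (fun s => a s = b)).card := by
  induction T with
  | zero => simp [matsPhi]
  | succ T ih =>
    rw [Finset.sum_Icc_succ_top (by omega)]
    have hb : ∀ b, ((Finset.Ico 1 (T + 1 + 1)).filter (fun s => a s = b)).card
        = ((Finset.Ico 1 (T + 1)).filter (fun s => a s = b)).card
          + if a (T + 1) = b then 1 else 0 := by
      intro b
      rw [← Finset.insert_Ico_right_eq_Ico_add_one (by omega), Finset.filter_insert]
      split_ifs
      · rw [Finset.card_insert_of_notMem (by simp)]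
      · rfl
    have hs := matsPhi_step m ((Finset.Ico 1 (T + 1)).filter (fun s => a s = a (T + 1))).card hm
    rw [← Finset.add_sum_erase _ _ (Finset.mem_univ (a (T + 1)))] at ih ⊢
    have he : ∑ b ∈ Finset.univ.erase (a (T + 1)),
        matsPhi m ((Finset.Ico 1 (T + 1 + 1)).filter (fun s => a s = b)).card
        = ∑ b ∈ Finset.univ.erase (a (T + 1)),
        matsPhi m ((Finset.Ico 1 (T + 1)).filter (fun s => a s = b)).card := by
      refine Finset.sum_congr rfl fun b hbm => ?_
      rw [hb, if_neg (fun h => (Finset.ne_of_mem_erase hbm) h.symm), add_zero]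
    rw [he, hb, if_pos rfl]
    linarith

/-- Key summation bound in the analysis of Multi-Agent Thompson Sampling:
`∑_{t=1}^T min(√(1/n_{a_t}(t)), 1) ≤ K + 2·√(K·T/m)`, where the minimum is
taken to be `1` when `n_{a_t}(t) = 0`. -/
theorem mats_sum_bound
    (T K m : ℕ) (hT : 0 < T) (hK : 0 < K) (hm : 0 < m)
    (a : ℕ → Fin K)
    (n : Fin K → ℕ → ℕ)
    (hn : ∀ b t, n b t = m * ((Finset.Ico 1 t).filter (fun s => a s = b)).card) :
    ∑ t ∈ Finset.Icc 1 T,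
        (if n (a t) t = 0 then (1 : ℝ)
         else min (Real.sqrt (1 / (n (a t) t))) 1)
      ≤ K + 2 * Real.sqrt (K * T / m) := by
  simp only [hn]
  refine (mats_pot K m hm a T).trans ?_
  refine (Finset.sum_le_sum fun b _ => matsPhi_le m _).trans ?_
  rw [Finset.sum_add_distrib, ← Finset.mul_sum]
  have hcard : ∑ b, ((Finset.Ico 1 (T + 1)).filter (fun s => a s = b)).card = T := by
    rw [← Finset.card_eq_sum_card_fiberwise (fun _ _ => Finset.mem_coe.2 (Finset.mem_univ _))]
    simp
  have hcs : ∑ b, Real.sqrt (((Finset.Ico 1 (T + 1)).filter (fun s => a s = b)).card : ℝ)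
      ≤ Real.sqrt (K * T) := by
    apply Real.le_sqrt_of_sq_le
    refine (sq_sum_le_card_mul_sum_sq).trans ?_
    simp only [Real.sq_sqrt (Nat.cast_nonneg _)]
    rw [← Nat.cast_sum, hcard]
    simp
  rw [Real.sqrt_div (by positivity)]
  calc _ ≤ (∑ _b : Fin K, (1 : ℝ)) + 2 / Real.sqrt m * Real.sqrt (K * T) := by gcongr
    _ = _ := by simp; ring
end
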